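/- Let μ > 0 and μ + λ ≥ 0. For every p ∈ [2,∞) there exists a constant C = C(μ,λ,p) > 0 such that for every Schwartz vector field u : ℝ² → ℝ² and every Schwartz function P : ℝ² → ℝ, setting F := μΔu + (μ+λ)∇(div u) − ∇P and G := (2μ+λ) div u − P, one has ‖G‖_{L^p(ℝ²)} + ‖curl u‖_{L^p(ℝ²)} ≤ C ‖F‖_{L²(ℝ²)}^{(p−2)/p} (‖∇u‖_{L²(ℝ²)} + ‖P‖_{L²(ℝ²)})^{2/p}. -/

import Mathlib

open MeasureTheory Real Set Metric

noncomputable section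

abbrev E2 := EuclideanSpace ℝ (Fin 2)

/-- The i-th standard basis vector of ℝ². -/
def e2 (i : Fin 2) : E2 := EuclideanSpace.single i (1 : ℝ)

/-- Divergence of a vector field on ℝ²: div u = ∂₁u¹ + ∂₂u². -/
def div2 (u : E2 → E2) (x : E2) : ℝ := ∑ i, fderiv ℝ u x (e2 i) i

/-- Curl (vorticity) of a vector field on ℝ²: curl u = ∂₂u¹ − ∂₁u². -/
def curl2 (u : E2 → E2) (x : E2) : ℝ :=
  fderiv ℝ u x (e2 1) 0 - fderiv ℝ u x (e2 0) 1

/-- Componentwise Laplacian of a vector field: (Δu)ⁱ = ∑ⱼ ∂ⱼ∂ⱼuⁱ. -/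
def lapVec (u : E2 → E2) (x : E2) (i : Fin 2) : ℝ :=
  ∑ j, fderiv ℝ (fun y => fderiv ℝ u y (e2 j) i) x (e2 j)

/-- The momentum flux F = μΔu + (μ+λ)∇(div u) − ∇P. -/
def NSflux (μ lam : ℝ) (u : E2 → E2) (P : E2 → ℝ) (x : E2) : E2 :=
  (EuclideanSpace.equiv (Fin 2) ℝ).symm fun i =>
    μ * lapVec u x i + (μ + lam) * fderiv ℝ (div2 u) x (e2 i) - fderiv ℝ P x (e2 i)

/-!
The momentum forcing splits as `F = ∇G + μ (∂₂ω, -∂₁ω)` with `ω = curl u`. Integrating by parts, a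
gradient field is `L²`-orthogonal to a rotated gradient field, so `‖F‖₂² = ‖∇G‖₂² + μ² ‖∇ω‖₂²`, and
both `G` and `ω` satisfy the planar Gagliardo–Nirenberg inequality
`‖f‖_p ≤ C ‖f‖₂ ^ (2 / p) ‖∇f‖₂ ^ (1 - 2 / p)`. The latter comes from the embedding of `W^{1,1}`
into `L²` applied to `‖f‖ ^ r`, which bounds the `2r`-th moment of `f` by the `2(r - 1)`-th:
iteration from `r = 2` reaches every even exponent, and log-convexity of the moments the exponents
in between.
-/

open Filter Topology
open scoped ENNReal NNReal SchwartzMap LineDeriv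

section Cutoff

variable {E F : Type*} [NormedAddCommGroup E] [NormedSpace ℝ E] [FiniteDimensional ℝ E]
  [NormedAddCommGroup F] [NormedSpace ℝ F]

variable (E) in
lemma exists_cutoff_seq : ∃ (χ : ℕ → E → ℝ) (δ : ℕ → ℝ), Tendsto δ atTop (𝓝 0) ∧
    (∀ n, ContDiff ℝ 1 (χ n)) ∧ (∀ n, HasCompactSupport (χ n)) ∧ (∀ n x, ‖χ n x‖ ≤ 1) ∧
    (∀ n x, ‖fderiv ℝ (χ n) x‖ ≤ δ n) ∧ ∀ x, ∀ᶠ n in atTop, χ n x = 1 := by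
  let χ : ContDiffBump (0 : E) := ⟨1, 2, one_pos, one_lt_two⟩
  have hχ : ContDiff ℝ 1 χ := χ.contDiff
  obtain ⟨M, hM⟩ : ∃ M, ∀ x, ‖fderiv ℝ χ x‖ ≤ M :=
    (hχ.continuous_fderiv one_ne_zero).bounded_above_of_compact_support
      (χ.hasCompactSupport.fderiv ℝ)
  let c : ℕ → ℝ := fun n ↦ 1 / ((n : ℝ) + 1)
  have hc_pos : ∀ n, 0 < c n := fun n ↦ Nat.one_div_pos_of_nat
  have hc : Tendsto c atTop (𝓝 0) := tendsto_one_div_add_atTop_nhds_zero_nat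
  refine ⟨fun n x ↦ χ (c n • x), fun n ↦ c n * M, by simpa using hc.mul_const M,
    fun n ↦ hχ.comp (contDiff_const_smul (c n)),
    fun n ↦ χ.hasCompactSupport.comp_smul (hc_pos n).ne',
    fun n x ↦ by simpa [abs_of_nonneg χ.nonneg] using χ.le_one, fun n x ↦ ?_, fun x ↦ ?_⟩
  · rw [fderiv_comp_smul, norm_smul, Real.norm_of_nonneg (hc_pos n).le]
    exact mul_le_mul_of_nonneg_left (hM _) (hc_pos n).le
  · have hcx : Tendsto (fun n ↦ c n • x) atTop (𝓝 0) := by simpa using hc.smul_const x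
    exact hcx.eventually χ.eventuallyEq_one

lemma exists_seq_hasCompactSupport_tendsto {f : E → F} (hf : ContDiff ℝ 1 f) :
    ∃ (g : ℕ → E → F) (δ : ℕ → ℝ), Tendsto δ atTop (𝓝 0) ∧
      (∀ n, ContDiff ℝ 1 (g n)) ∧ (∀ n, HasCompactSupport (g n)) ∧ (∀ n x, ‖g n x‖ ≤ ‖f x‖) ∧
      (∀ n x, ‖fderiv ℝ (g n) x‖ ≤ ‖fderiv ℝ f x‖ + δ n * ‖f x‖) ∧
      ∀ x, Tendsto (fun n ↦ g n x) atTop (𝓝 (f x)) := by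
  obtain ⟨χ, δ, hδ, hχ, hχ_supp, hχ_le, hDχ, hχ_one⟩ := exists_cutoff_seq E
  refine ⟨fun n x ↦ χ n x • f x, δ, hδ, fun n ↦ (hχ n).smul hf,
    fun n ↦ (hχ_supp n).smul_right, fun n x ↦ ?_, fun n x ↦ ?_, fun x ↦ ?_⟩
  · rw [norm_smul]
    exact mul_le_of_le_one_left (norm_nonneg _) (hχ_le n x)
  · rw [fderiv_fun_smul ((hχ n).differentiable one_ne_zero x) (hf.differentiable one_ne_zero x)]
    refine (norm_add_le _ _).trans ?_
    rw [norm_smul, ContinuousLinearMap.norm_smulRight_apply]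
    gcongr
    exacts [mul_le_of_le_one_left (norm_nonneg _) (hχ_le n x), hDχ n x]
  · refine tendsto_const_nhds.congr' ?_
    filter_upwards [hχ_one x] with n hn
    rw [hn, one_smul]

end Cutoff

lemma memLp_fderiv {E F : Type*} [NormedAddCommGroup E] [NormedSpace ℝ E] [NormedAddCommGroup F]
    [NormedSpace ℝ F] [MeasurableSpace E] [OpensMeasurableSpace E] [SecondCountableTopology E]
    (f : 𝓢(E, F)) (p : ℝ≥0∞) (ν : Measure E) [ν.HasTemperateGrowth] :
    MemLp (fderiv ℝ f) p ν :=
  (SchwartzMap.fderivCLM ℝ E F f).memLp p ν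

section LpNorm

variable {α G H : Type*} [MeasurableSpace α] {ν : Measure α} [NormedAddCommGroup G]
  [NormedAddCommGroup H]

lemma lpNorm_two_eq_integral_norm_sq {f : α → G} (hf : AEStronglyMeasurable f ν) :
    lpNorm f 2 ν = (∫ x, ‖f x‖ ^ 2 ∂ν) ^ (1 / 2 : ℝ) := by
  simpa using lpNorm_nnreal_eq_integral_norm_rpow (p := 2) two_ne_zero hf

lemma sq_lpNorm_two {f : α → G} (hf : AEStronglyMeasurable f ν) :
    lpNorm f 2 ν ^ 2 = ∫ x, ‖f x‖ ^ 2 ∂ν := by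
  rw [lpNorm_two_eq_integral_norm_sq hf, ← Real.sqrt_eq_rpow,
    Real.sq_sqrt (integral_nonneg fun _ ↦ by positivity)]

lemma lpNorm_le_mul_lpNorm {p : ℝ≥0∞} {f : α → G} {g : α → H} {c : ℝ} (hc : 0 ≤ c)
    (hg : MemLp g p ν) (hfg : ∀ x, ‖f x‖ ≤ c * ‖g x‖) :
    lpNorm f p ν ≤ c * lpNorm g p ν := by
  have hcg : lpNorm (fun x ↦ c * ‖g x‖) p ν = ‖c‖₊ * lpNorm (fun x ↦ ‖g x‖) p ν :=
    lpNorm_const_smul c (fun x ↦ ‖g x‖) ν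
  rw [lpNorm_norm hg.aestronglyMeasurable, coe_nnnorm, Real.norm_of_nonneg hc] at hcg
  exact (lpNorm_mono_real (hg.norm.const_mul c) hfg).trans_eq hcg

end LpNorm

section GagliardoNirenberg

lemma lintegral_rpow_add_le {α : Type*} [MeasurableSpace α] {ν : Measure α} {g : α → ℝ≥0∞}
    (hg : AEMeasurable g ν) {a b s t : ℝ} (ha : 0 ≤ a) (hb : 0 ≤ b) (hs : 0 ≤ s) (ht : 0 ≤ t)
    (hst : s + t = 1) :
    ∫⁻ x, g x ^ (a * s + b * t) ∂ν ≤ (∫⁻ x, g x ^ a ∂ν) ^ s * (∫⁻ x, g x ^ b ∂ν) ^ t := by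
  simp_rw [ENNReal.rpow_add_of_nonneg _ _ (mul_nonneg ha hs) (mul_nonneg hb ht), ENNReal.rpow_mul]
  exact ENNReal.lintegral_mul_norm_pow_le (hg.pow_const a) (hg.pow_const b) hs ht hst

variable {E F : Type*} [NormedAddCommGroup E] [NormedSpace ℝ E] [FiniteDimensional ℝ E]
  [MeasurableSpace E] [BorelSpace E] [NormedAddCommGroup F] [InnerProductSpace ℝ F]
  (ν : Measure E) [ν.IsAddHaarMeasure]

lemma lintegral_enorm_rpow_two_mul_le (hE : Module.finrank ℝ E = 2) {f : E → F}
    (hf : ContDiff ℝ 1 f) (hf_supp : HasCompactSupport f) {r : ℝ≥0} (hr : 1 < r) :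
    ∫⁻ x, ‖f x‖ₑ ^ (2 * r : ℝ) ∂ν ≤ lintegralPowLePowLIntegralFDerivConst ν 2 * r ^ 2 *
      (∫⁻ x, ‖f x‖ₑ ^ (2 * (r - 1) : ℝ) ∂ν) * ∫⁻ x, ‖fderiv ℝ f x‖ₑ ^ 2 ∂ν := by
  set C := lintegralPowLePowLIntegralFDerivConst ν 2
  have hr' : (1 : ℝ) < r := mod_cast hr
  have hGNS : ∫⁻ x, ‖‖f x‖ ^ (r : ℝ)‖ₑ ^ (2 : ℝ) ∂ν ≤
      C * (∫⁻ x, ‖fderiv ℝ (fun x ↦ ‖f x‖ ^ (r : ℝ)) x‖ₑ ∂ν) ^ (2 : ℝ) :=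
    lintegral_pow_le_pow_lintegral_fderiv ν (hf.norm_rpow hr')
      (hf_supp.norm.rpow_const (by positivity)) (by simpa [hE] using Real.HolderConjugate.two_two)
  have hCS : (∫⁻ x, ‖f x‖ₑ ^ (r - 1 : ℝ) * ‖fderiv ℝ f x‖ₑ ∂ν) ^ 2 ≤
      (∫⁻ x, ‖f x‖ₑ ^ (2 * (r - 1) : ℝ) ∂ν) * ∫⁻ x, ‖fderiv ℝ f x‖ₑ ^ 2 ∂ν := by
    have := ENNReal.lintegral_mul_le_Lp_mul_Lq ν Real.HolderConjugate.two_two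
      (hf.continuous.enorm.aemeasurable.pow_const (r - 1 : ℝ))
      (hf.continuous_fderiv one_ne_zero).enorm.aemeasurable
    refine (pow_le_pow_left₀ zero_le this 2).trans_eq ?_
    rw [mul_pow]
    simp only [← ENNReal.rpow_natCast, ← ENNReal.rpow_mul]
    norm_num [mul_comm]
  calc ∫⁻ x, ‖f x‖ₑ ^ (2 * r : ℝ) ∂ν
      = ∫⁻ x, ‖‖f x‖ ^ (r : ℝ)‖ₑ ^ (2 : ℝ) ∂ν := by
        simp_rw [Real.enorm_rpow_of_nonneg (norm_nonneg _) r.coe_nonneg, enorm_norm,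
          ← ENNReal.rpow_mul, mul_comm (r : ℝ)]
    _ ≤ C * (∫⁻ x, r * (‖f x‖ₑ ^ (r - 1 : ℝ) * ‖fderiv ℝ f x‖ₑ) ∂ν) ^ 2 := by
        rw [← ENNReal.rpow_two]
        refine hGNS.trans ?_
        gcongr with x
        rw [← mul_assoc]
        exact enorm_fderiv_norm_rpow_le (hf.differentiable one_ne_zero) hr
    _ = C * r ^ 2 * (∫⁻ x, ‖f x‖ₑ ^ (r - 1 : ℝ) * ‖fderiv ℝ f x‖ₑ ∂ν) ^ 2 := by
        rw [lintegral_const_mul' _ _ ENNReal.coe_ne_top, mul_pow, mul_assoc]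
    _ ≤ C * r ^ 2 * ((∫⁻ x, ‖f x‖ₑ ^ (2 * (r - 1) : ℝ) ∂ν) * ∫⁻ x, ‖fderiv ℝ f x‖ₑ ^ 2 ∂ν) := by
        gcongr
    _ = _ := (mul_assoc _ _ _).symm

lemma exists_lintegral_enorm_rpow_even_le (hE : Module.finrank ℝ E = 2) (k : ℕ) :
    ∃ C : ℝ≥0, ∀ f : E → F, ContDiff ℝ 1 f → HasCompactSupport f →
      ∫⁻ x, ‖f x‖ₑ ^ (2 * (k + 1) : ℝ) ∂ν ≤
        C * (∫⁻ x, ‖f x‖ₑ ^ (2 : ℝ) ∂ν) * (∫⁻ x, ‖fderiv ℝ f x‖ₑ ^ 2 ∂ν) ^ k := by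
  induction k with
  | zero => exact ⟨1, fun f _ _ ↦ by simp⟩
  | succ k ih =>
    obtain ⟨C, hC⟩ := ih
    let C' : ℝ≥0 := lintegralPowLePowLIntegralFDerivConst ν 2 * (k + 1 + 1) ^ 2
    refine ⟨C' * C, fun f hf hf_supp ↦ ?_⟩
    set I := ∫⁻ x, ‖f x‖ₑ ^ (2 : ℝ) ∂ν
    set J := ∫⁻ x, ‖fderiv ℝ f x‖ₑ ^ 2 ∂ν
    have step : ∫⁻ x, ‖f x‖ₑ ^ (2 * ((k + 1 : ℕ) + 1) : ℝ) ∂ν ≤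
        C' * (∫⁻ x, ‖f x‖ₑ ^ (2 * (k + 1) : ℝ) ∂ν) * J := by
      have hr : (1 : ℝ≥0) < k + 1 + 1 := lt_add_of_pos_left 1 k.cast_add_one_pos
      simpa [C'] using lintegral_enorm_rpow_two_mul_le ν hE hf hf_supp hr
    calc _ ≤ C' * (C * I * J ^ k) * J := by grw [step, hC f hf hf_supp]
      _ = (C' * C : ℝ≥0) * I * J ^ (k + 1) := by push_cast; ring

lemma exists_lintegral_enorm_rpow_le (hE : Module.finrank ℝ E = 2) {p : ℝ} (hp : 2 ≤ p) :
    ∃ C : ℝ≥0, ∀ f : E → F, ContDiff ℝ 1 f → HasCompactSupport f →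
      ∫⁻ x, ‖f x‖ₑ ^ p ∂ν ≤
        C * (∫⁻ x, ‖f x‖ₑ ^ (2 : ℝ) ∂ν) * (∫⁻ x, ‖fderiv ℝ f x‖ₑ ^ 2 ∂ν) ^ ((p - 2) / 2) := by
  obtain ⟨k, hk⟩ := exists_nat_gt ((p - 2) / 2)
  have hk_pos : (0 : ℝ) < k := by linarith
  obtain ⟨C, hC⟩ := exists_lintegral_enorm_rpow_even_le (F := F) ν hE k
  set t : ℝ := (p - 2) / (2 * k) with ht
  have ht_nonneg : 0 ≤ t := div_nonneg (by linarith) (by positivity)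
  have ht_le : t ≤ 1 := by rw [ht, div_le_one (by positivity)]; linarith
  refine ⟨C ^ t, fun f hf hf_supp ↦ ?_⟩
  set I := ∫⁻ x, ‖f x‖ₑ ^ (2 : ℝ) ∂ν
  set J := ∫⁻ x, ‖fderiv ℝ f x‖ₑ ^ 2 ∂ν
  calc ∫⁻ x, ‖f x‖ₑ ^ p ∂ν
      = ∫⁻ x, ‖f x‖ₑ ^ (2 * (1 - t) + (2 * (k + 1)) * t) ∂ν := by
        congr! 3; rw [ht]; field_simp; ring
    _ ≤ I ^ (1 - t) * (∫⁻ x, ‖f x‖ₑ ^ (2 * (k + 1) : ℝ) ∂ν) ^ t :=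
        lintegral_rpow_add_le hf.continuous.enorm.aemeasurable zero_le_two (by positivity)
          (sub_nonneg.2 ht_le) ht_nonneg (sub_add_cancel 1 t)
    _ ≤ I ^ (1 - t) * (C * I * J ^ k) ^ t := by grw [hC f hf hf_supp]
    _ = C ^ t * (I ^ (1 - t) * I ^ t) * J ^ (k * t) := by
        rw [ENNReal.mul_rpow_of_nonneg _ _ ht_nonneg, ENNReal.mul_rpow_of_nonneg _ _ ht_nonneg,
          ← ENNReal.rpow_natCast_mul]
        ring
    _ = (C ^ t : ℝ≥0) * I * J ^ ((p - 2) / 2) := by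
        rw [← ENNReal.rpow_add_of_nonneg _ _ (sub_nonneg.2 ht_le) ht_nonneg, sub_add_cancel,
          ENNReal.rpow_one, ENNReal.coe_rpow_of_nonneg _ ht_nonneg]
        congr 2; rw [ht]; field_simp

lemma exists_eLpNorm_le_mul_eLpNorm_fderiv_of_hasCompactSupport
    (hE : Module.finrank ℝ E = 2) {p : ℝ≥0} (hp : 2 ≤ p) :
    ∃ C : ℝ≥0, ∀ f : E → F, ContDiff ℝ 1 f → HasCompactSupport f →
      eLpNorm f p ν ≤
        C * eLpNorm f 2 ν ^ (2 / p : ℝ) * eLpNorm (fderiv ℝ f) 2 ν ^ ((p - 2) / p : ℝ) := by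
  have hp' : (2 : ℝ) ≤ p := mod_cast hp
  have hp_pos : (0 : ℝ) < p := by linarith
  obtain ⟨C, hC⟩ := exists_lintegral_enorm_rpow_le (F := F) ν hE hp'
  refine ⟨C ^ (p⁻¹ : ℝ), fun f hf hf_supp ↦ ?_⟩
  have hf2 : ∫⁻ x, ‖f x‖ₑ ^ (2 : ℝ) ∂ν = eLpNorm f 2 ν ^ (2 : ℝ) :=
    (eLpNorm_nnreal_pow_eq_lintegral (p := 2) two_ne_zero).symm
  have hDf2 : ∫⁻ x, ‖fderiv ℝ f x‖ₑ ^ 2 ∂ν = eLpNorm (fderiv ℝ f) 2 ν ^ (2 : ℝ) := by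
    simpa using (eLpNorm_nnreal_pow_eq_lintegral (f := fderiv ℝ f) (μ := ν) (p := 2)
      two_ne_zero).symm
  rw [← ENNReal.rpow_le_rpow_iff hp_pos,
    eLpNorm_nnreal_pow_eq_lintegral (NNReal.coe_pos.1 hp_pos).ne']
  refine (hC f hf hf_supp).trans_eq ?_
  rw [hf2, hDf2, ENNReal.mul_rpow_of_nonneg _ _ hp_pos.le, ENNReal.mul_rpow_of_nonneg _ _ hp_pos.le,
    ENNReal.coe_rpow_of_nonneg _ (inv_nonneg.2 hp_pos.le), ← ENNReal.rpow_mul,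
    ← ENNReal.rpow_mul, ← ENNReal.rpow_mul, ← ENNReal.rpow_mul, inv_mul_cancel₀ hp_pos.ne',
    div_mul_cancel₀ _ hp_pos.ne', div_mul_cancel₀ _ hp_pos.ne', ENNReal.rpow_one]
  congr 2
  ring

lemma exists_eLpNorm_le_mul_eLpNorm_fderiv (hE : Module.finrank ℝ E = 2) {p : ℝ≥0} (hp : 2 ≤ p) :
    ∃ C : ℝ≥0, ∀ f : E → F, ContDiff ℝ 1 f → MemLp f 2 ν →
      eLpNorm f p ν ≤
        C * eLpNorm f 2 ν ^ (2 / p : ℝ) * eLpNorm (fderiv ℝ f) 2 ν ^ ((p - 2) / p : ℝ) := by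
  obtain ⟨C, hC⟩ :=
    exists_eLpNorm_le_mul_eLpNorm_fderiv_of_hasCompactSupport (F := F) ν hE hp
  refine ⟨C, fun f hf hf2 ↦ ?_⟩
  have hexp : 0 ≤ ((p - 2) / p : ℝ) :=
    div_nonneg (sub_nonneg.2 (mod_cast hp)) p.coe_nonneg
  obtain ⟨g, δ, hδ, hg, hg_supp, hg_le, hDg_le, hg_lim⟩ := exists_seq_hasCompactSupport_tendsto hf
  set A := C * eLpNorm f 2 ν ^ (2 / p : ℝ)
  have hA : A ≠ ⊤ := ENNReal.mul_ne_top ENNReal.coe_ne_top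
    (ENNReal.rpow_ne_top_of_nonneg (by positivity) hf2.eLpNorm_ne_top)
  have hDg (n : ℕ) : eLpNorm (fderiv ℝ (g n)) 2 ν ≤
      eLpNorm (fderiv ℝ f) 2 ν + ‖δ n‖ₑ * eLpNorm f 2 ν := by
    rw [← eLpNorm_norm (fderiv ℝ f), ← eLpNorm_norm f, ← eLpNorm_const_smul]
    exact (eLpNorm_mono_real (hDg_le n)).trans (eLpNorm_add_le
      (hf.continuous_fderiv one_ne_zero).norm.aestronglyMeasurable
      (hf.continuous.norm.aestronglyMeasurable.const_mul _) one_le_two)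
  have hlim : Tendsto (fun n ↦ A * (eLpNorm (fderiv ℝ f) 2 ν +
      ‖δ n‖ₑ * eLpNorm f 2 ν) ^ ((p - 2) / p : ℝ)) atTop
      (𝓝 (A * eLpNorm (fderiv ℝ f) 2 ν ^ ((p - 2) / p : ℝ))) := by
    have hδ' : Tendsto (fun n ↦ ‖δ n‖ₑ * eLpNorm f 2 ν) atTop (𝓝 0) := by
      simpa using ENNReal.Tendsto.mul_const hδ.enorm (.inr hf2.eLpNorm_ne_top)
    refine ENNReal.Tendsto.const_mul (Tendsto.ennrpow_const _ ?_) (.inr hA)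
    simpa using hδ'.const_add (eLpNorm (fderiv ℝ f) 2 ν)
  calc eLpNorm f p ν
      ≤ liminf (fun n ↦ eLpNorm (g n) p ν) atTop :=
        Lp.eLpNorm_lim_le_liminf_eLpNorm (fun n ↦ (hg n).continuous.aestronglyMeasurable) f
          (ae_of_all _ hg_lim)
    _ ≤ liminf (fun n ↦ A * (eLpNorm (fderiv ℝ f) 2 ν +
          ‖δ n‖ₑ * eLpNorm f 2 ν) ^ ((p - 2) / p : ℝ)) atTop :=
        liminf_le_liminf <| .of_forall fun n ↦ (hC (g n) (hg n) (hg_supp n)).trans <| by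
          have := eLpNorm_mono (μ := ν) (p := 2) (hg_le n)
          grw [this, hDg n]
    _ = A * eLpNorm (fderiv ℝ f) 2 ν ^ ((p - 2) / p : ℝ) := hlim.liminf_eq

lemma exists_lpNorm_le_mul_lpNorm_fderiv (hE : Module.finrank ℝ E = 2) {p : ℝ≥0} (hp : 2 ≤ p) :
    ∃ C : ℝ, 0 < C ∧ ∀ f : 𝓢(E, F),
      lpNorm f p ν ≤
        C * lpNorm f 2 ν ^ (2 / p : ℝ) * lpNorm (fderiv ℝ f) 2 ν ^ ((p - 2) / p : ℝ) := by
  obtain ⟨C, hC⟩ := exists_eLpNorm_le_mul_eLpNorm_fderiv (F := F) ν hE hp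
  refine ⟨C + 1, by positivity, fun f ↦ ?_⟩
  have hf := f.memLp 2 ν
  have hDf := memLp_fderiv f 2 ν
  have hexp : 0 ≤ ((p - 2) / p : ℝ) := div_nonneg (sub_nonneg.2 (mod_cast hp)) p.coe_nonneg
  have hC_f : lpNorm f p ν ≤
      C * lpNorm f 2 ν ^ (2 / p : ℝ) * lpNorm (fderiv ℝ f) 2 ν ^ ((p - 2) / p : ℝ) := by
    have := ENNReal.toReal_mono (ENNReal.mul_ne_top (ENNReal.mul_ne_top ENNReal.coe_ne_top
      (ENNReal.rpow_ne_top_of_nonneg (by positivity) hf.eLpNorm_ne_top))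
      (ENNReal.rpow_ne_top_of_nonneg hexp hDf.eLpNorm_ne_top)) (hC f (f.smooth 1) hf)
    rwa [ENNReal.toReal_mul, ENNReal.toReal_mul, ← ENNReal.toReal_rpow, ← ENNReal.toReal_rpow,
      toReal_eLpNorm (f.memLp p ν).aestronglyMeasurable, toReal_eLpNorm hf.aestronglyMeasurable,
      toReal_eLpNorm hDf.aestronglyMeasurable] at this
  have hnonneg : 0 ≤ lpNorm f 2 ν ^ (2 / p : ℝ) * lpNorm (fderiv ℝ f) 2 ν ^ ((p - 2) / p : ℝ) :=
    mul_nonneg (Real.rpow_nonneg lpNorm_nonneg _) (Real.rpow_nonneg lpNorm_nonneg _)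
  linear_combination hC_f + hnonneg

lemma exists_lpNorm_le_of_lpNorm_le_of_lpNorm_fderiv_le (hE : Module.finrank ℝ E = 2) {p : ℝ≥0}
    (hp : 2 ≤ p) :
    ∃ C : ℝ, 0 < C ∧ ∀ (f : 𝓢(E, F)) {a b : ℝ}, lpNorm f 2 ν ≤ a → lpNorm (fderiv ℝ f) 2 ν ≤ b →
      lpNorm f p ν ≤ C * a ^ (2 / p : ℝ) * b ^ ((p - 2) / p : ℝ) := by
  obtain ⟨C, hC_pos, hC⟩ := exists_lpNorm_le_mul_lpNorm_fderiv (F := F) ν hE hp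
  refine ⟨C, hC_pos, fun f a b ha hb ↦ (hC f).trans ?_⟩
  have hexp : 0 ≤ ((p - 2) / p : ℝ) := div_nonneg (sub_nonneg.2 (mod_cast hp)) p.coe_nonneg
  have hf_nonneg : 0 ≤ lpNorm f 2 ν := lpNorm_nonneg
  have hDf_nonneg : 0 ≤ lpNorm (fderiv ℝ f) 2 ν := lpNorm_nonneg
  have ha_nonneg : 0 ≤ a := hf_nonneg.trans ha
  gcongr

end GagliardoNirenberg

section Schwartz

variable {E F : Type*} [NormedAddCommGroup E] [NormedSpace ℝ E] [NormedAddCommGroup F]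
  [NormedSpace ℝ F]

lemma lineDerivOp_comm (f : 𝓢(E, F)) (v w : E) : ∂_{v} (∂_{w} f) = ∂_{w} (∂_{v} f) := by
  have hsnd (a b x : E) : (∂_{a} (∂_{b} f)) x = fderiv ℝ (fderiv ℝ f) x a b := by
    simpa [iteratedFDeriv_two_apply, LineDeriv.iteratedLineDerivOp_succ_left] using
      SchwartzMap.iteratedLineDerivOp_eq_iteratedFDeriv (m := ![a, b]) (f := f) (x := x)
  ext x
  rw [hsnd, hsnd]
  exact (f.smooth 2).contDiffAt.isSymmSndFDerivAt (by simp) v w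

lemma lineDerivOp_sub (v : E) (f g : 𝓢(E, F)) : ∂_{v} (f - g) = ∂_{v} f - ∂_{v} g :=
  (LineDeriv.lineDerivOpCLM ℝ 𝓢(E, F) v).map_sub f g

variable [MeasurableSpace E] [BorelSpace E] (ν : Measure E) [ν.IsAddHaarMeasure]

lemma integral_lineDerivOp_mul_lineDerivOp_comm [FiniteDimensional ℝ E] (f g : 𝓢(E, ℝ))
    (v w : E) : ∫ x, ∂_{v} f x * ∂_{w} g x ∂ν = ∫ x, ∂_{w} f x * ∂_{v} g x ∂ν := by
  have hv := SchwartzMap.integral_mul_lineDerivOp_right_eq_neg_left (μ := ν) f (∂_{w} g) v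
  have hw := SchwartzMap.integral_mul_lineDerivOp_right_eq_neg_left (μ := ν) f (∂_{v} g) w
  rw [lineDerivOp_comm g v w, hw] at hv
  exact (neg_injective hv).symm

end Schwartz

section InnerSchwartz

variable {E : Type*} [NormedAddCommGroup E] [InnerProductSpace ℝ E] [FiniteDimensional ℝ E]
  [MeasurableSpace E] [BorelSpace E] (ν : Measure E) [ν.IsAddHaarMeasure]

lemma integral_gradient_add_rotated_gradient_sq (b : OrthonormalBasis (Fin 2) ℝ E)
    (f g : 𝓢(E, ℝ)) (c : ℝ) :
    ∫ x, ((∂_{b 0} f x + c * ∂_{b 1} g x) ^ 2 + (∂_{b 1} f x - c * ∂_{b 0} g x) ^ 2) ∂ν =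
      ∫ x, ‖fderiv ℝ f x‖ ^ 2 ∂ν + c ^ 2 * ∫ x, ‖fderiv ℝ g x‖ ^ 2 ∂ν := by
  have hprod (φ ψ : 𝓢(E, ℝ)) : Integrable (fun x ↦ φ x * ψ x) ν :=
    (SchwartzMap.pairing (ContinuousLinearMap.mul ℝ ℝ) φ ψ).integrable
  have hfderiv_sq (φ : 𝓢(E, ℝ)) : Integrable (fun x ↦ ‖fderiv ℝ φ x‖ ^ 2) ν :=
    (memLp_fderiv φ 2 ν).integrable_norm_pow two_ne_zero
  have hfderiv_add : Integrable (fun x ↦ ‖fderiv ℝ f x‖ ^ 2 + c ^ 2 * ‖fderiv ℝ g x‖ ^ 2) ν :=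
    (hfderiv_sq f).add ((hfderiv_sq g).const_mul _)
  have hcross : ∫ x, (∂_{b 0} f x * ∂_{b 1} g x - ∂_{b 1} f x * ∂_{b 0} g x) ∂ν = 0 := by
    rw [integral_sub (hprod _ _) (hprod _ _), integral_lineDerivOp_mul_lineDerivOp_comm, sub_self]
  calc ∫ x, ((∂_{b 0} f x + c * ∂_{b 1} g x) ^ 2 + (∂_{b 1} f x - c * ∂_{b 0} g x) ^ 2) ∂ν
      = ∫ x, (‖fderiv ℝ f x‖ ^ 2 + c ^ 2 * ‖fderiv ℝ g x‖ ^ 2 +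
          2 * c * (∂_{b 0} f x * ∂_{b 1} g x - ∂_{b 1} f x * ∂_{b 0} g x)) ∂ν := by
        simp only [b.norm_dual, Fin.sum_univ_two, SchwartzMap.lineDerivOp_apply_eq_fderiv]
        congr! 2
        ring
    _ = ∫ x, ‖fderiv ℝ f x‖ ^ 2 ∂ν + c ^ 2 * ∫ x, ‖fderiv ℝ g x‖ ^ 2 ∂ν := by
        rw [integral_add hfderiv_add (((hprod _ _).sub' (hprod _ _)).const_mul _),
          integral_add (hfderiv_sq f) ((hfderiv_sq g).const_mul _), integral_const_mul,
          integral_const_mul, hcross, mul_zero, add_zero]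

end InnerSchwartz

section EffectiveFlux

/-- The `j`-th component of a Schwartz vector field on the plane, as a Schwartz function. -/
def component (u : 𝓢(E2, E2)) (j : Fin 2) : 𝓢(E2, ℝ) :=
  SchwartzMap.postcompCLM (EuclideanSpace.proj j : E2 →L[ℝ] ℝ) u

/-- The divergence `div2 u` of a Schwartz vector field, as a Schwartz function. -/
def divergence (u : 𝓢(E2, E2)) : 𝓢(E2, ℝ) :=
  ∂_{e2 0} (component u 0) + ∂_{e2 1} (component u 1)

/-- The vorticity `curl2 u` of a Schwartz vector field, as a Schwartz function. -/
def vorticity (u : 𝓢(E2, E2)) : 𝓢(E2, ℝ) :=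
  ∂_{e2 1} (component u 0) - ∂_{e2 0} (component u 1)

/-- The effective viscous flux `G = (2μ + λ) div u − P`, as a Schwartz function. -/
def effectiveFlux (μ lam : ℝ) (u : 𝓢(E2, E2)) (P : 𝓢(E2, ℝ)) : 𝓢(E2, ℝ) :=
  (2 * μ + lam) • divergence u - P

variable (μ lam : ℝ) (u : 𝓢(E2, E2)) (P : 𝓢(E2, ℝ))

lemma fderiv_apply_component (x v : E2) (j : Fin 2) :
    fderiv ℝ u x v j = ∂_{v} (component u j) x := by
  rw [SchwartzMap.lineDerivOp_apply_eq_fderiv]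
  exact DFunLike.congr_fun ((EuclideanSpace.proj j : E2 →L[ℝ] ℝ).hasFDerivAt.comp x
    (u.hasFDerivAt x)).fderiv.symm v

lemma div2_eq_divergence : div2 u = divergence u := by
  ext x
  simp only [div2, Fin.sum_univ_two, fderiv_apply_component]
  rfl

lemma curl2_eq_vorticity : curl2 u = vorticity u := by
  ext x
  simp only [curl2, fderiv_apply_component]
  rfl

lemma lapVec_apply (x : E2) (i : Fin 2) :
    lapVec u x i =
      ∂_{e2 0} (∂_{e2 0} (component u i)) x + ∂_{e2 1} (∂_{e2 1} (component u i)) x := by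
  simp only [lapVec, Fin.sum_univ_two, fderiv_apply_component]
  rfl

lemma NSflux_eq_gradient_add_rotated_gradient (x : E2) :
    NSflux μ lam u P x =
      !₂[∂_{e2 0} (effectiveFlux μ lam u P) x + μ * ∂_{e2 1} (vorticity u) x,
        ∂_{e2 1} (effectiveFlux μ lam u P) x - μ * ∂_{e2 0} (vorticity u) x] := by
  ext i
  change μ * lapVec u x i + (μ + lam) * fderiv ℝ (div2 u) x (e2 i) - fderiv ℝ P x (e2 i) = _
  rw [lapVec_apply, div2_eq_divergence, ← SchwartzMap.lineDerivOp_apply_eq_fderiv,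
    ← SchwartzMap.lineDerivOp_apply_eq_fderiv]
  fin_cases i <;>
    simp only [Fin.zero_eta, Fin.mk_one, Matrix.cons_val_zero, Matrix.cons_val_one,
      Matrix.cons_val_fin_one, effectiveFlux, vorticity, divergence, lineDerivOp_sub,
      LineDeriv.lineDerivOp_add, LineDeriv.lineDerivOp_smul, lineDerivOp_comm _ (e2 1) (e2 0),
      add_apply, sub_apply, smul_apply, smul_eq_mul] <;>
    ring

lemma continuous_NSflux : Continuous (NSflux μ lam u P) := by
  rw [funext (NSflux_eq_gradient_add_rotated_gradient μ lam u P)]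
  fun_prop

lemma integral_norm_sq_NSflux :
    ∫ x, ‖NSflux μ lam u P x‖ ^ 2 =
      (∫ x, ‖fderiv ℝ (effectiveFlux μ lam u P) x‖ ^ 2) +
        μ ^ 2 * ∫ x, ‖fderiv ℝ (vorticity u) x‖ ^ 2 := by
  have he2 (i : Fin 2) : EuclideanSpace.basisFun (Fin 2) ℝ i = e2 i := by
    rw [EuclideanSpace.basisFun_apply, e2]
  rw [← integral_gradient_add_rotated_gradient_sq volume (EuclideanSpace.basisFun (Fin 2) ℝ)]
  simp [NSflux_eq_gradient_add_rotated_gradient, EuclideanSpace.norm_sq_eq, he2]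

lemma sq_lpNorm_two_NSflux :
    lpNorm (NSflux μ lam u P) 2 volume ^ 2 =
      lpNorm (fderiv ℝ (effectiveFlux μ lam u P)) 2 volume ^ 2 +
        (μ * lpNorm (fderiv ℝ (vorticity u)) 2 volume) ^ 2 := by
  rw [mul_pow, sq_lpNorm_two (continuous_NSflux μ lam u P).aestronglyMeasurable,
    sq_lpNorm_two (memLp_fderiv _ 2 _).aestronglyMeasurable,
    sq_lpNorm_two (memLp_fderiv _ 2 _).aestronglyMeasurable]
  exact integral_norm_sq_NSflux μ lam u P

lemma lpNorm_fderiv_effectiveFlux_le :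
    lpNorm (fderiv ℝ (effectiveFlux μ lam u P)) 2 volume ≤ lpNorm (NSflux μ lam u P) 2 volume := by
  refine (pow_le_pow_iff_left₀ lpNorm_nonneg lpNorm_nonneg two_ne_zero).1 ?_
  rw [sq_lpNorm_two_NSflux]
  exact le_add_of_nonneg_right (sq_nonneg _)

lemma abs_mul_lpNorm_fderiv_vorticity_le :
    |μ| * lpNorm (fderiv ℝ (vorticity u)) 2 volume ≤ lpNorm (NSflux μ lam u P) 2 volume := by
  refine (pow_le_pow_iff_left₀ (mul_nonneg (abs_nonneg μ) lpNorm_nonneg) lpNorm_nonneg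
    two_ne_zero).1 ?_
  rw [sq_lpNorm_two_NSflux, mul_pow, sq_abs, ← mul_pow]
  exact le_add_of_nonneg_left (sq_nonneg _)

lemma norm_fderiv_apply_e2_apply_le (x : E2) (i j : Fin 2) :
    ‖fderiv ℝ u x (e2 i) j‖ ≤ ‖fderiv ℝ u x‖ :=
  calc ‖fderiv ℝ u x (e2 i) j‖ ≤ ‖fderiv ℝ u x (e2 i)‖ := PiLp.norm_apply_le _ j
    _ ≤ ‖fderiv ℝ u x‖ := (fderiv ℝ u x).unit_le_opNorm _ (by simp [e2])

lemma lpNorm_divergence_le (p : ℝ≥0∞) :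
    lpNorm (divergence u) p volume ≤ 2 * lpNorm (fderiv ℝ u) p volume := by
  refine lpNorm_le_mul_lpNorm zero_le_two (memLp_fderiv u p volume) fun x ↦ ?_
  rw [← div2_eq_divergence, div2, Fin.sum_univ_two, two_mul]
  exact norm_add_le_of_le (norm_fderiv_apply_e2_apply_le u x 0 0)
    (norm_fderiv_apply_e2_apply_le u x 1 1)

lemma lpNorm_vorticity_le (p : ℝ≥0∞) :
    lpNorm (vorticity u) p volume ≤ 2 * lpNorm (fderiv ℝ u) p volume := by
  refine lpNorm_le_mul_lpNorm zero_le_two (memLp_fderiv u p volume) fun x ↦ ?_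
  rw [← curl2_eq_vorticity, curl2, two_mul]
  exact norm_sub_le_of_le (norm_fderiv_apply_e2_apply_le u x 1 0)
    (norm_fderiv_apply_e2_apply_le u x 0 1)

lemma lpNorm_effectiveFlux_le {p : ℝ≥0∞} (hp : 1 ≤ p) :
    lpNorm (effectiveFlux μ lam u P) p volume ≤
      2 * |2 * μ + lam| * lpNorm (fderiv ℝ u) p volume + lpNorm P p volume := by
  have hsub : lpNorm (effectiveFlux μ lam u P) p volume ≤
      lpNorm ((2 * μ + lam) • ⇑(divergence u)) p volume + lpNorm P p volume :=
    lpNorm_sub_le (((divergence u).memLp p volume).const_smul _) hp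
  rw [lpNorm_const_smul, coe_nnnorm, Real.norm_eq_abs] at hsub
  grw [hsub, lpNorm_divergence_le]
  exact le_of_eq (by ring)

end EffectiveFlux

lemma exists_lpNorm_effectiveFlux_add_lpNorm_vorticity_le {μ : ℝ} (lam : ℝ) (hμ : μ ≠ 0) {p : ℝ≥0}
    (hp : 2 ≤ p) :
    ∃ C : ℝ, 0 < C ∧ ∀ (u : 𝓢(E2, E2)) (P : 𝓢(E2, ℝ)),
      lpNorm (effectiveFlux μ lam u P) p volume + lpNorm (vorticity u) p volume ≤
        C * lpNorm (NSflux μ lam u P) 2 volume ^ ((p - 2) / p : ℝ) *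
          (lpNorm (fderiv ℝ u) 2 volume + lpNorm P 2 volume) ^ (2 / p : ℝ) := by
  obtain ⟨C, hC_pos, hC⟩ := exists_lpNorm_le_of_lpNorm_le_of_lpNorm_fderiv_le (E := E2) (F := ℝ)
    volume finrank_euclideanSpace_fin hp
  let A : ℝ := 2 * |2 * μ + lam| + 1
  refine ⟨C * (A ^ (2 / p : ℝ) + 2 ^ (2 / p : ℝ) * |μ|⁻¹ ^ ((p - 2) / p : ℝ)), by positivity,
    fun u P ↦ ?_⟩
  set N := lpNorm (fderiv ℝ u) 2 volume + lpNorm P 2 volume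
  set Q := lpNorm (NSflux μ lam u P) 2 volume
  have hDu : 0 ≤ lpNorm (fderiv ℝ u) 2 volume := lpNorm_nonneg
  have hP : 0 ≤ lpNorm P 2 volume := lpNorm_nonneg
  have hN_nonneg : 0 ≤ N := add_nonneg hDu hP
  have hQ_nonneg : 0 ≤ Q := lpNorm_nonneg
  have hG : lpNorm (effectiveFlux μ lam u P) 2 volume ≤ A * N := by
    grw [lpNorm_effectiveFlux_le μ lam u P one_le_two]
    linear_combination hDu + 2 * |2 * μ + lam| * hP
  have hω : lpNorm (vorticity u) 2 volume ≤ 2 * N := by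
    grw [lpNorm_vorticity_le u 2]
    linear_combination 2 * hP
  have hDω : lpNorm (fderiv ℝ (vorticity u)) 2 volume ≤ |μ|⁻¹ * Q :=
    (le_inv_mul_iff₀ (abs_pos.2 hμ)).2 (abs_mul_lpNorm_fderiv_vorticity_le μ lam u P)
  calc lpNorm (effectiveFlux μ lam u P) p volume + lpNorm (vorticity u) p volume
      ≤ C * (A * N) ^ (2 / p : ℝ) * Q ^ ((p - 2) / p : ℝ) +
          C * (2 * N) ^ (2 / p : ℝ) * (|μ|⁻¹ * Q) ^ ((p - 2) / p : ℝ) :=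
        add_le_add (hC _ hG (lpNorm_fderiv_effectiveFlux_le μ lam u P))
          (hC _ hω hDω)
    _ = _ := by
        rw [Real.mul_rpow (by positivity) hN_nonneg, Real.mul_rpow zero_le_two hN_nonneg,
          Real.mul_rpow (by positivity) hQ_nonneg]
        ring

theorem effective_flux_interpolation_estimate_general (μ lam : ℝ) (hμ : μ ≠ 0) (p : ℝ)
    (hp : 2 ≤ p) :
    ∃ C : ℝ, 0 < C ∧ ∀ (u : SchwartzMap E2 E2) (P : SchwartzMap E2 ℝ),
      (∫ x : E2, |(2 * μ + lam) * div2 (⇑u) x - P x| ^ p) ^ (1 / p) +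
      (∫ x : E2, |curl2 (⇑u) x| ^ p) ^ (1 / p) ≤
        C * ((∫ x : E2, ‖NSflux μ lam (⇑u) (⇑P) x‖ ^ 2) ^ (1 / 2 : ℝ)) ^ ((p - 2) / p) *
          ((∫ x : E2, ‖fderiv ℝ (⇑u) x‖ ^ 2) ^ (1 / 2 : ℝ) +
           (∫ x : E2, (P x) ^ 2) ^ (1 / 2 : ℝ)) ^ (2 / p) := by
  lift p to ℝ≥0 using zero_le_two.trans hp
  have hp_ne : p ≠ 0 := (two_pos.trans_le (mod_cast hp : 2 ≤ p)).ne'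
  obtain ⟨C, hC_pos, hC⟩ :=
    exists_lpNorm_effectiveFlux_add_lpNorm_vorticity_le lam hμ (mod_cast hp : 2 ≤ p)
  refine ⟨C, hC_pos, fun u P ↦ ?_⟩
  have hLp (f : 𝓢(E2, ℝ)) : lpNorm f p volume = (∫ x, |f x| ^ (p : ℝ)) ^ (1 / p : ℝ) := by
    rw [one_div]
    exact lpNorm_nnreal_eq_integral_norm_rpow hp_ne (f.memLp p volume).aestronglyMeasurable
  have hP : lpNorm P 2 volume = (∫ x, P x ^ 2) ^ (1 / 2 : ℝ) := by
    simpa using lpNorm_two_eq_integral_norm_sq (P.memLp 2 volume).aestronglyMeasurable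
  have h := hC u P
  rw [hLp, hLp, hP, lpNorm_two_eq_integral_norm_sq (memLp_fderiv u 2 volume).aestronglyMeasurable,
    lpNorm_two_eq_integral_norm_sq (continuous_NSflux μ lam u P).aestronglyMeasurable] at h
  rw [div2_eq_divergence, curl2_eq_vorticity]
  exact h

/-- Estimate (h20) of Lemma 2.6: interpolation bound
‖G‖_{L^p} + ‖curl u‖_{L^p} ≤ C ‖F‖_{L²}^{(p−2)/p} (‖∇u‖_{L²} + ‖P‖_{L²})^{2/p}. -/
theorem effective_flux_interpolation_estimate (μ lam : ℝ) (hμ : 0 < μ) (hlam : 0 ≤ μ + lam)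
    (p : ℝ) (hp : 2 ≤ p) :
    ∃ C : ℝ, 0 < C ∧ ∀ (u : SchwartzMap E2 E2) (P : SchwartzMap E2 ℝ),
      (∫ x : E2, |(2 * μ + lam) * div2 (⇑u) x - P x| ^ p) ^ (1 / p) +
      (∫ x : E2, |curl2 (⇑u) x| ^ p) ^ (1 / p) ≤
        C * ((∫ x : E2, ‖NSflux μ lam (⇑u) (⇑P) x‖ ^ 2) ^ (1 / 2 : ℝ)) ^ ((p - 2) / p) *
          ((∫ x : E2, ‖fderiv ℝ (⇑u) x‖ ^ 2) ^ (1 / 2 : ℝ) +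
           (∫ x : E2, (P x) ^ 2) ^ (1 / 2 : ℝ)) ^ (2 / p) :=
  effective_flux_interpolation_estimate_general μ lam hμ.ne' p hp
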